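/- arXiv:2107.06308 — 2 statements merged into one kernel-verified Lean document; each statement's English description precedes it below -/
import Mathlib

section
/- Let k be a field of characteristic 2, let m ≥ 3, and let D be the dihedral group of order 2^m. For every s ≥ 0, the group cohomology H^s(D; k) with coefficients in the trivial module k is a k-vector space of dimension s + 1. (This reflects the ring isomorphism H^*(D; k) ≅ k[x₁, y₁, z]/(x₁y₁) with |x₁| = |y₁| = 1 and |z| = 2.) -/
open CategoryTheory groupCohomology

namespace DihCoh

section general
variable {k G : Type} [Field k] [Group G]

lemma shortExact_mk {A B C : Rep.{0} k G} (f : A ⟶ B) (g : B ⟶ C)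
    (hf : Function.Injective f.hom) (hg : Function.Surjective g.hom)
    (hfg : Function.Exact f.hom g.hom) :
    ∃ w : f ≫ g = 0, (ShortComplex.mk f g w).ShortExact := by
  have w : f ≫ g = 0 := by
    ext x
    exact hfg.apply_apply_eq_zero x
  refine ⟨w, ?_⟩
  refine { exact := ?_, mono_f := (Rep.mono_iff_injective _).2 hf,
           epi_g := (Rep.epi_iff_surjective _).2 hg }
  rw [← ShortComplex.exact_map_iff_of_faithful _ (forget₂ (Rep.{0} k G) (ModuleCat.{0} k)),
    ShortComplex.moduleCat_exact_iff]
  intro x hx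
  exact (hfg x).1 hx

variable {X : ShortComplex (Rep.{0} k G)} (hX : X.ShortExact)

lemma ex1 (n : ℕ) : Function.Exact (δ hX n (n+1) rfl).hom (map (.id G) X.f (n+1)).hom :=
  (ShortComplex.ShortExact.moduleCat_exact_iff_function_exact _).1 (mapShortComplex₁_exact hX rfl)

include hX in
lemma ex2 (n : ℕ) : Function.Exact (map (.id G) X.f n).hom (map (.id G) X.g n).hom :=
  (ShortComplex.ShortExact.moduleCat_exact_iff_function_exact _).1 (mapShortComplex₂_exact hX n)

lemma ex3 (n : ℕ) : Function.Exact (map (.id G) X.g n).hom (δ hX n (n+1) rfl).hom :=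
  (ShortComplex.ShortExact.moduleCat_exact_iff_function_exact _).1 (mapShortComplex₃_exact hX rfl)

include hX in
lemma inj0 : Function.Injective (map (.id G) X.f 0).hom := by
  have := hX.mono_f
  exact (ModuleCat.mono_iff_injective _).1 inferInstance

lemma rank_ses {A B C : Type} [AddCommGroup A] [AddCommGroup B] [AddCommGroup C]
    [Module k A] [Module k B] [Module k C] (f : A →ₗ[k] B) (g : B →ₗ[k] C)
    (hf : Function.Injective f) (hg : Function.Surjective g) (h : Function.Exact f g) :
    Module.rank k B = Module.rank k A + Module.rank k C := by
  rw [← LinearMap.rank_range_add_rank_ker g, h.linearMap_ker_eq, rank_range_of_surjective g hg,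
    rank_range_of_injective f hf, add_comm]

/-- vanishing criterion -/
lemma isZero_of_free (B : Rep.{0} k G) (φ : B.V →ₗ[k] k)
    (hφ : Function.Bijective (fun (b : B.V) (g : G) => φ (B.ρ g b))) (n : ℕ) :
    Limits.IsZero (groupCohomology B (n+1)) := by
  let S : Subgroup G := ⊥
  let A : Rep.{0} k S := Rep.trivial k S k
  let f : Rep.res S.subtype B ⟶ A := Rep.ofHom ⟨φ, fun g => by
    obtain ⟨g, hg⟩ := g
    obtain rfl : g = 1 := by simpa [S] using hg
    ext x
    simp⟩
  let F := Rep.resCoindToHom S.subtype B A f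
  have hF : Function.Bijective F.hom := by
    constructor
    · intro a b hab
      apply hφ.1
      funext g
      have := congrFun (congrArg Subtype.val hab) g
      exact this
    · intro c
      obtain ⟨b, hb⟩ := hφ.2 c.1
      refine ⟨b, Subtype.ext ?_⟩
      exact hb
  have : Mono F := (Rep.mono_iff_injective _).2 hF.1
  have : Epi F := (Rep.epi_iff_surjective _).2 hF.2
  have : IsIso F := isIso_of_mono_of_epi F
  refine Limits.IsZero.of_iso ?_ ((groupCohomology.functor k G (n+1)).mapIso (asIso F) ≪≫ coindIso A (n+1))
  exact isZero_groupCohomology_succ_of_subsingleton A n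

lemma surj0 {A B : Rep.{0} k G} (f : A ⟶ B)
    (h : ∀ b : B.V, (∀ g, B.ρ g b = b) → ∃ a : A.V, (∀ g, A.ρ g a = a) ∧ f.hom a = b) :
    Function.Surjective (map (.id G) f 0).hom := by
  intro y
  obtain ⟨a, ha, hab⟩ := h ((H0Iso B).hom y).1 ((H0Iso B).hom y).2
  refine ⟨(H0Iso A).inv ⟨a, ha⟩, ?_⟩
  apply ((H0Iso B).toLinearEquiv).injective
  have := congr($(map_id_comp_H0Iso_hom f) ((H0Iso A).inv ⟨a, ha⟩))
  refine this.trans ?_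
  rw [ConcreteCategory.comp_apply, Iso.inv_hom_id_apply]
  exact Subtype.ext hab

lemma zero0 {A B : Rep.{0} k G} (f : A ⟶ B)
    (h : ∀ a : A.V, (∀ g, A.ρ g a = a) → f.hom a = 0) :
    ∀ x, (map (.id G) f 0).hom x = 0 := by
  intro x
  apply ((H0Iso B).toLinearEquiv).injective
  have := congr($(map_id_comp_H0Iso_hom f) x)
  rw [map_zero]
  refine this.trans ?_
  refine Subtype.ext ?_
  exact h ((H0Iso A).hom x).1 ((H0Iso A).hom x).2

end general

section dihedral
open DihedralGroup
variable (k : Type) [Field k] (q : ℕ)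

/-- functions on the vertices (`c = 0`) or edges (`c = 1`) of the `q`-gon -/
def Frep (c : ZMod q) : Representation k (DihedralGroup q) (ZMod q → k) where
  toFun g := match g with
    | r i => LinearMap.funLeft k k (fun x => x - i)
    | sr i => LinearMap.funLeft k k (fun x => -x - i - c)
  map_one' := by
    rw [DihedralGroup.one_def]
    ext f x
    simp [LinearMap.funLeft]
  map_mul' g h := by
    cases g <;> cases h <;> 
      simp only [r_mul_r, r_mul_sr, sr_mul_r, sr_mul_sr] <;>
      refine LinearMap.ext fun f => funext fun x => congrArg f ?_ <;> ring

lemma Frep_r (c i : ZMod q) (f : ZMod q → k) (x : ZMod q) : Frep k q c (r i) f x = f (x - i) := rfl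
lemma Frep_sr (c i : ZMod q) (f : ZMod q → k) (x : ZMod q) :
    Frep k q c (sr i) f x = f (-x - i - c) := rfl

variable {k q}
/-- tensoring with functions on the two orientations -/
def Trep {V : Type} [AddCommGroup V] [Module k V] (ρ : Representation k (DihedralGroup q) V) :
    Representation k (DihedralGroup q) (V × V) where
  toFun g := match g with
    | r i => LinearMap.prod (ρ (r i) ∘ₗ LinearMap.fst k V V) (ρ (r i) ∘ₗ LinearMap.snd k V V)
    | sr i => LinearMap.prod (ρ (sr i) ∘ₗ LinearMap.snd k V V) (ρ (sr i) ∘ₗ LinearMap.fst k V V)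
  map_one' := by
    rw [DihedralGroup.one_def]
    refine LinearMap.ext fun x => ?_
    simp
  map_mul' g h := by
    cases g <;> cases h <;> 
      simp only [r_mul_r, r_mul_sr, sr_mul_r, sr_mul_sr] <;>
      refine LinearMap.ext fun x => Prod.ext ?_ ?_ <;>
      first
      | exact congr($(map_mul ρ (r _) (r _)) _)
      | exact congr($(map_mul ρ (r _) (sr _)) _)
      | exact congr($(map_mul ρ (sr _) (r _)) _)
      | exact congr($(map_mul ρ (sr _) (sr _)) _)

lemma Trep_r {V : Type} [AddCommGroup V] [Module k V] (ρ : Representation k (DihedralGroup q) V)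
    (i : ZMod q) (x : V × V) : Trep ρ (r i) x = (ρ (r i) x.1, ρ (r i) x.2) := rfl
lemma Trep_sr {V : Type} [AddCommGroup V] [Module k V] (ρ : Representation k (DihedralGroup q) V)
    (i : ZMod q) (x : V × V) : Trep ρ (sr i) x = (ρ (sr i) x.2, ρ (sr i) x.1) := rfl

noncomputable def Tf (V : Rep.{0} k (DihedralGroup q)) : V ⟶ Rep.of (Trep V.ρ) :=
  Rep.ofHom ⟨LinearMap.prod LinearMap.id LinearMap.id, fun g => by
    cases g <;> exact LinearMap.ext fun x => rfl⟩

noncomputable def Tg (V : Rep.{0} k (DihedralGroup q)) : Rep.of (Trep V.ρ) ⟶ V :=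
  Rep.ofHom ⟨LinearMap.fst k V.V V.V + LinearMap.snd k V.V V.V, fun g => by
    cases g
    · exact LinearMap.ext fun x => (map_add (V.ρ _) x.1 x.2).symm
    · exact LinearMap.ext fun x => (add_comm _ _).trans (map_add (V.ρ _) x.1 x.2).symm⟩

lemma Tf_apply (V : Rep.{0} k (DihedralGroup q)) (v : V.V) : (Tf V).hom v = (v, v) := rfl
lemma Tg_apply (V : Rep.{0} k (DihedralGroup q)) (v : V.V × V.V) : (Tg V).hom v = v.1 + v.2 := rfl

noncomputable def Tmap {V W : Rep.{0} k (DihedralGroup q)} (f : V ⟶ W) :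
    Rep.of (Trep V.ρ) ⟶ Rep.of (Trep W.ρ) :=
  Rep.ofHom ⟨LinearMap.prodMap f.hom.toLinearMap f.hom.toLinearMap, fun g => by
    cases g
    · exact LinearMap.ext fun x => Prod.ext (Rep.hom_comm_apply f _ _) (Rep.hom_comm_apply f _ _)
    · exact LinearMap.ext fun x => Prod.ext (Rep.hom_comm_apply f _ _) (Rep.hom_comm_apply f _ _)⟩

variable [CharP k 2]

lemma add_self_zero' {V : Type} [AddCommGroup V] [Module k V] (v : V) : v + v = 0 := by
  have : (2 : k) • v = 0 := by rw [CharTwo.two_eq_zero, zero_smul]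
  rwa [two_smul] at this

lemma eq_of_add_zero {V : Type} [AddCommGroup V] [Module k V] {v w : V} (h : v + w = 0) : v = w := by
  have := add_self_zero' (k := k) w
  exact add_right_cancel (h.trans this.symm)

lemma T_aux (V : Rep.{0} k (DihedralGroup q)) :
    ∃ w : Tf V ≫ Tg V = 0, (ShortComplex.mk (Tf V) (Tg V) w).ShortExact := by
  apply shortExact_mk
  · intro a b h
    exact congrArg Prod.fst h
  · intro a
    refine ⟨((a, 0) : V.V × V.V), ?_⟩
    rw [Tg_apply]; simp
  · intro x
    rw [Tg_apply]
    constructor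
    · intro h
      refine ⟨x.1, ?_⟩
      rw [Tf_apply]
      exact Prod.ext rfl (eq_of_add_zero (k := k) h)
    · rintro ⟨a, rfl⟩
      rw [Tf_apply]
      exact add_self_zero' (k := k) a

noncomputable abbrev TX (V : Rep.{0} k (DihedralGroup q)) : ShortComplex (Rep.{0} k (DihedralGroup q)) :=
  ShortComplex.mk (Tf V) (Tg V) (T_aux V).choose

lemma TX_se (V : Rep.{0} k (DihedralGroup q)) : (TX V).ShortExact := (T_aux V).choose_spec

noncomputable def TXmap {V W : Rep.{0} k (DihedralGroup q)} (f : V ⟶ W) : TX V ⟶ TX W where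
  τ₁ := f
  τ₂ := Tmap f
  τ₃ := f
  comm₁₂ := by ext x <;> rfl
  comm₂₃ := by
    refine Rep.hom_ext (Representation.IntertwiningMap.ext <| LinearMap.ext fun (x : V.V × V.V) => ?_)
    exact (map_add f.hom x.1 x.2).symm

noncomputable abbrev dT (V : Rep.{0} k (DihedralGroup q)) (n : ℕ) :
    groupCohomology V n ⟶ groupCohomology V (n+1) := δ (TX_se V) n (n+1) rfl

lemma dT_nat {V W : Rep.{0} k (DihedralGroup q)} (f : V ⟶ W) (n : ℕ) (x : groupCohomology V n) :
    (map (.id _) f (n+1)).hom ((dT V n).hom x) = (dT W n).hom ((map (.id _) f n).hom x) :=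
  congr($(δ_naturality (TX_se V) (TX_se W) (TXmap f) n (n+1) rfl) x)

variable (k q) in
abbrev F (c : ZMod q) : Rep.{0} k (DihedralGroup q) := Rep.of (Frep k q c)

omit [CharP k 2] in
lemma TF_zero (c : ZMod q) (n : ℕ) :
    Limits.IsZero (groupCohomology (Rep.of (Trep (F k q c).ρ)) (n+1)) := by
  apply isZero_of_free _ (LinearMap.proj (0 : ZMod q) ∘ₗ LinearMap.fst k (ZMod q → k) (ZMod q → k))
  constructor
  · intro a b h
    refine Prod.ext (funext fun x => ?_) (funext fun x => ?_)
    · have : a.1 (0 - -x) = b.1 (0 - -x) := congrFun h (r (-x))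
      simpa using this
    · have : a.2 (-0 - (-x - c) - c) = b.2 (-0 - (-x - c) - c) := congrFun h (sr (-x - c))
      simpa using this
  · intro u
    refine ⟨((fun x => u (r (-x)), fun x => u (sr (-x - c))) : (ZMod q → k) × (ZMod q → k)), ?_⟩
    funext g
    cases g with
    | r i => exact congrArg u (by simp)
    | sr i => 
      change u (sr (-(-0 - i - c) - c)) = _
      exact congrArg u (by simp)

omit [CharP k 2] in
lemma inv_const {c : ZMod q} {f : ZMod q → k} (hf : ∀ i, Frep k q c (r i) f = f) (x : ZMod q) :
    f x = f 0 := by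
  have := congrFun (hf x) x
  rw [Frep_r] at this
  simpa using this.symm

lemma dT_surj (c : ZMod q) (n : ℕ) : Function.Surjective (dT (F k q c) n).hom := by
  have := epi_δ_of_isZero (TX_se (F k q c)) n (TF_zero c n)
  exact (ModuleCat.epi_iff_surjective _).1 this

lemma dT_inj (c : ZMod q) (n : ℕ) : Function.Injective (dT (F k q c) n).hom := by
  cases n with
  | succ n =>
    have := mono_δ_of_isZero (TX_se (F k q c)) (n+1) (TF_zero c n)
    exact (ModuleCat.mono_iff_injective _).1 this
  | zero =>
    rw [injective_iff_map_eq_zero]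
    intro a ha
    obtain ⟨b, rfl⟩ := (ex3 (TX_se (F k q c)) 0 a).1 ha
    refine zero0 (Tg (F k q c)) ?_ b
    intro v hv
    rw [Tg_apply]
    have h1 : ∀ i, Frep k q c (r i) v.1 = v.1 := fun i => congrArg Prod.fst (hv (r i))
    have h2 : ∀ i, Frep k q c (r i) v.2 = v.2 := fun i => congrArg Prod.snd (hv (r i))
    have h3 : Frep k q c (sr 0) v.2 = v.1 := congrArg Prod.fst (hv (sr 0))
    have : v.1 = v.2 := by
      rw [← h3]
      funext x
      rw [Frep_sr, inv_const h2, inv_const h2 x]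
    rw [this]
    exact add_self_zero' (k := k) _

lemma rank_F (c : ZMod q) (n : ℕ) : Module.rank k (groupCohomology (F k q c) n) = 1 := by
  induction n with
  | succ n ih =>
    rw [← ih]
    exact (LinearEquiv.ofBijective _ ⟨dT_inj c n, dT_surj c n⟩).rank_eq.symm
  | zero =>
    rw [(H0Iso (F k q c)).toLinearEquiv.rank_eq]
    let e : (Frep k q c).invariants →ₗ[k] k :=
      (LinearMap.proj (0 : ZMod q)) ∘ₗ (Frep k q c).invariants.subtype
    have he : Function.Bijective e := by
      constructor
      · intro a b hab
        refine Subtype.ext (funext fun x => ?_)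
        rw [inv_const (fun i => a.2 (r i)) x, inv_const (fun i => b.2 (r i)) x]
        exact hab
      · intro a
        refine ⟨⟨fun _ => a, fun g => ?_⟩, rfl⟩
        cases g <;> rfl
    exact (LinearEquiv.ofBijective e he).rank_eq.trans (Module.rank_self k)

variable (k q) in
abbrev kk : Rep.{0} k (DihedralGroup q) := Rep.trivial k (DihedralGroup q) k

omit [CharP k 2] in
lemma rank_k0 : Module.rank k (groupCohomology (kk k q) 0) = 1 := by
  rw [(H0IsoOfIsTrivial (kk k q)).toLinearEquiv.rank_eq]
  exact Module.rank_self k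

lemma surj_all {c : ZMod q} {V : Rep.{0} k (DihedralGroup q)} (f : V ⟶ F k q c)
    (h : Function.Surjective (map (.id _) f 0).hom) (n : ℕ) :
    Function.Surjective (map (.id _) f n).hom := by
  induction n with
  | zero => exact h
  | succ n ih =>
    intro y
    obtain ⟨z, rfl⟩ := dT_surj c n y
    obtain ⟨x, rfl⟩ := ih z
    exact ⟨_, dT_nat f n x⟩

lemma zero_all {c : ZMod q} {V : Rep.{0} k (DihedralGroup q)} (f : F k q c ⟶ V)
    (h : ∀ x : groupCohomology (F k q c) 0, (map (.id (DihedralGroup q)) f 0).hom x = 0) (n : ℕ) :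
    ∀ x : groupCohomology (F k q c) n, (map (.id (DihedralGroup q)) f n).hom x = 0 := by
  induction n with
  | zero => exact h
  | succ n ih =>
    intro y
    obtain ⟨z, rfl⟩ := dT_surj c n y
    rw [dT_nat, ih, map_zero]

noncomputable abbrev hmap {A B : Rep.{0} k (DihedralGroup q)} (f : A ⟶ B) (n : ℕ) :
    groupCohomology A n ⟶ groupCohomology B n := map (.id _) f n

lemma rank_of_seqs [NeZero q] (M : Rep.{0} k (DihedralGroup q))
    (c d : ZMod q) (f : kk k q ⟶ F k q c) (g : F k q c ⟶ M) (w : f ≫ g = 0)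
    (hX : (ShortComplex.mk f g w).ShortExact)
    (f' : M ⟶ F k q d) (g' : F k q d ⟶ kk k q) (w' : f' ≫ g' = 0)
    (hY : (ShortComplex.mk f' g' w').ShortExact)
    (hf : Function.Surjective (hmap f 0).hom)
    (hg : ∀ x : groupCohomology (F k q d) 0, (hmap g' 0).hom x = 0) (n : ℕ) :
    Module.rank k (groupCohomology (kk k q) n) = n + 1 := by
  have hf := surj_all f hf
  have hg := zero_all g' hg
  have s1 (n : ℕ) : Module.rank k (groupCohomology (kk k q) (n+1)) =
      Module.rank k (groupCohomology M n) + 1 := by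
    rw [rank_ses (δ hX n (n+1) rfl).hom (hmap f (n+1)).hom ?_ (hf _) (ex1 hX n), rank_F]
    rw [injective_iff_map_eq_zero]
    intro a ha
    obtain ⟨b, rfl⟩ := (ex3 hX n a).1 ha
    obtain ⟨b', rfl⟩ := hf n b
    exact (ex2 hX n).apply_apply_eq_zero b'
  have s0 : Module.rank k (groupCohomology M 0) = 1 := by
    rw [← rank_F (k := k) d 0]
    have i0 : Function.Injective (hmap f' 0).hom := by
      have : Mono f' := hY.mono_f
      exact (ModuleCat.mono_iff_injective _).1 (inferInstanceAs (Mono (map (.id _) f' 0)))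
    have j0 : Function.Surjective (hmap f' 0).hom := fun y => (ex2 hY 0 y).1 (hg 0 y)
    exact (LinearEquiv.ofBijective (hmap f' 0).hom ⟨i0, j0⟩).rank_eq
  have s2 (n : ℕ) : Module.rank k (groupCohomology M (n+1)) =
      Module.rank k (groupCohomology (kk k q) n) + 1 := by
    rw [rank_ses (δ hY n (n+1) rfl).hom (hmap f' (n+1)).hom ?_ ?_ (ex1 hY n), rank_F]
    · rw [injective_iff_map_eq_zero]
      intro a ha
      obtain ⟨b, rfl⟩ := (ex3 hY n a).1 ha
      exact hg n b
    · intro y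
      exact (ex2 hY (n+1) y).1 (hg _ y)
  induction n using Nat.twoStepInduction with
  | zero => simpa using rank_k0
  | one => rw [s1, s0]; simp
  | more n ih _ => rw [s1, s2, ih]; norm_cast

variable (k q) in
noncomputable def sumL [NeZero q] : (ZMod q → k) →ₗ[k] k := ∑ i, LinearMap.proj i

omit [CharP k 2] in
lemma sumL_apply [NeZero q] (f : ZMod q → k) : sumL k q f = ∑ i, f i := by simp [sumL]

omit [CharP k 2] in
lemma sumL_inv [NeZero q] (c : ZMod q) (g : DihedralGroup q) (f : ZMod q → k) :
    sumL k q (Frep k q c g f) = sumL k q f := by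
  rw [sumL_apply, sumL_apply]
  cases g with
  | r i => exact Fintype.sum_equiv (Equiv.subRight i) _ _ fun x => rfl
  | sr i => 
    exact Fintype.sum_equiv ((Equiv.neg _).trans (Equiv.subRight (i+c))) _ _ fun x => by
      rw [Frep_sr]; congr 1; simp; ring

/-- the kernel of the sum map -/
noncomputable def Mrep [NeZero q] (c : ZMod q) : 
    Representation k (DihedralGroup q) (LinearMap.ker (sumL k q)) where
  toFun g := (Frep k q c g).restrict fun f hf => by
    rw [LinearMap.mem_ker] at *
    rw [sumL_inv, hf]
  map_one' := by ext; simp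
  map_mul' _ _ := by ext; simp

variable (k q) in
def dL : (ZMod q → k) →ₗ[k] (ZMod q → k) :=
  LinearMap.id + LinearMap.funLeft k k (fun x => x + 1)

omit [CharP k 2] in
lemma dL_apply (f : ZMod q → k) (x : ZMod q) : dL k q f x = f x + f (x + 1) := rfl

lemma sum_dL [NeZero q] (f : ZMod q → k) : sumL k q (dL k q f) = 0 := by
  rw [sumL_apply]
  simp only [dL_apply, Finset.sum_add_distrib]
  rw [Fintype.sum_equiv (Equiv.addRight (1 : ZMod q)) (fun x => f (x+1)) f fun x => rfl]
  exact CharTwo.add_self_eq_zero _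

lemma ker_dL [NeZero q] (f : ZMod q → k) (h : dL k q f = 0) (x : ZMod q) : f x = f 0 := by
  have h1 (x : ZMod q) : f (x + 1) = f x := by
    have := congrFun h x
    rw [dL_apply] at this
    exact (eq_of_add_zero (k := k) this).symm
  have h2 (n : ℕ) : f (n : ZMod q) = f 0 := by
    induction n with
    | zero => simp
    | succ n ih => rw [Nat.cast_succ, h1, ih]
  rw [← ZMod.natCast_zmod_val x, h2]

lemma dL_surj [NeZero q] (f : ZMod q → k) (h : sumL k q f = 0) : ∃ g, dL k q g = f := by
  have hle : LinearMap.range (dL k q) ≤ LinearMap.ker (sumL k q) := by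
    rintro _ ⟨g, rfl⟩
    exact sum_dL g
  have hs : Function.Surjective (sumL k q) := fun a => ⟨Pi.single 0 a, by simp [sumL_apply]⟩
  have e1 := LinearMap.finrank_range_add_finrank_ker (sumL k q)
  have e2 := LinearMap.finrank_range_add_finrank_ker (dL k q)
  rw [LinearMap.range_eq_top.2 hs, finrank_top, Module.finrank_self] at e1
  have e3 : Module.finrank k (LinearMap.ker (dL k q)) ≤ 1 := by
    rw [← Module.finrank_self k]
    refine LinearMap.finrank_le_finrank_of_injective
      (f := LinearMap.proj (0 : ZMod q) ∘ₗ (LinearMap.ker (dL k q)).subtype) ?_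
    intro a b hab
    refine Subtype.ext (funext fun x => ?_)
    rw [ker_dL a.1 a.2 x, ker_dL b.1 b.2 x]
    exact hab
  have := Submodule.eq_of_le_of_finrank_le hle (by omega)
  have hf : f ∈ LinearMap.range (dL k q) := this ▸ h
  exact hf

omit [CharP k 2] in
lemma dL_equiv (g : DihedralGroup q) (f : ZMod q → k) :
    dL k q (Frep k q 0 g f) = Frep k q 1 g (dL k q f) := by
  funext x
  cases g with
  | r i =>
    simp only [dL_apply, Frep_r]
    congr 2; ring
  | sr i => 
    simp only [dL_apply, Frep_sr]
    rw [add_comm]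
    congr 2 <;> ring

theorem main [NeZero q] (hq : (q : k) = 0) (n : ℕ) :
    Module.rank k (groupCohomology (kk k q) n) = n + 1 := by
  let M : Rep.{0} k (DihedralGroup q) := Rep.of (Mrep (k := k) (q := q) 1)
  let f : kk k q ⟶ F k q 0 := Rep.ofHom ⟨LinearMap.pi fun _ => LinearMap.id, fun g => by
    cases g <;> rfl⟩
  let g : F k q 0 ⟶ M := Rep.ofHom ⟨(dL k q).codRestrict _ fun x => sum_dL x, fun g => by
    refine LinearMap.ext fun x => Subtype.ext ?_
    exact dL_equiv g x⟩
  let f' : M ⟶ F k q 1 := Rep.ofHom ⟨Submodule.subtype _, fun g => rfl⟩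
  let g' : F k q 1 ⟶ kk k q := Rep.ofHom ⟨sumL k q, fun g => by
    refine LinearMap.ext fun x => ?_
    exact sumL_inv 1 g x⟩
  obtain ⟨w, hX⟩ := shortExact_mk f g
    (fun a b h => congrFun h 0)
    (fun b => by
      obtain ⟨a, ha⟩ := dL_surj b.1 b.2
      exact ⟨a, Subtype.ext ha⟩)
    (fun x => by
      constructor
      · intro h
        have h : dL k q x = 0 := congrArg Subtype.val h
        exact ⟨x 0, funext fun y => (ker_dL x h y).symm⟩
      · rintro ⟨a, rfl⟩
        refine Subtype.ext (funext fun y => ?_)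
        exact CharTwo.add_self_eq_zero a)
  obtain ⟨w', hY⟩ := shortExact_mk f' g'
    (fun a b h => Subtype.ext h)
    (fun a => ⟨Pi.single 0 a, (sumL_apply _).trans (by simp)⟩)
    (fun x => by
      constructor
      · intro h
        exact ⟨⟨x, h⟩, rfl⟩
      · rintro ⟨a, rfl⟩
        exact a.2)
  refine rank_of_seqs M 0 1 f g w hX f' g' w' hY ?_ ?_ n
  · apply surj0
    intro b hb
    exact ⟨b 0, fun _ => rfl, funext fun x => (inv_const (fun i => hb (r i)) x).symm⟩
  · apply zero0
    intro a ha
    refine (sumL_apply a).trans ?_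
    rw [Finset.sum_congr rfl (fun x _ => inv_const (fun i => ha (r i)) x)]
    simp [hq]

end dihedral
end DihCoh

/-- For `k` a field of characteristic `2`, `m ≥ 3`, and `D` the dihedral group of order `2^m`
(`DihedralGroup (2^(m-1))`, of order `2 * 2^(m-1) = 2^m`), the group cohomology `H^s(D; k)`
is a `k`-vector space of dimension `s + 1` for every `s ≥ 0`. -/
theorem groupCohomology_dihedral_dimensions
    (k : Type) [Field k] [CharP k 2] (m : ℕ) (hm : 3 ≤ m) (s : ℕ) :
    Module.finrank k
      (groupCohomology (Rep.trivial k (DihedralGroup (2 ^ (m - 1))) k) s) = s + 1 := by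
  have hq : ((2 ^ (m - 1) : ℕ) : k) = 0 := by
    rw [Nat.cast_pow, Nat.cast_two, CharTwo.two_eq_zero, zero_pow (by omega)]
  refine Module.finrank_eq_of_rank_eq ?_
  rw [DihCoh.main hq s]
  push_cast
  rfl
end

section
/- Let p be a prime, let G be a nontrivial finite p-group, and let k be a field of characteristic p. Then the group cohomology of G with trivial coefficients k is unbounded: there are infinitely many s ≥ 0 with H^s(G; k) ≠ 0. (Equivalently, the trivial module k is not a perfect complex of kG-modules, so it defines a nonzero object of the stable module category.) -/
open CategoryTheory in
/-- Cohomology of a finite cyclic group whose order vanishes in `k` is nonzero in positive degrees. -/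
lemma cyclic_nontrivial {k C : Type} [Field k] [CommGroup C] [Fintype C] (g : C)
    (hg : ∀ x, x ∈ Subgroup.zpowers g) (hc : (Fintype.card C : k) = 0) (s : ℕ) (hs : s ≠ 0) :
    Nontrivial (groupCohomology (Rep.trivial k C k) s) := by
  have hN : (Rep.trivial k C k).norm.hom.toLinearMap = 0 := by
    apply LinearMap.ext
    intro x
    change (Rep.trivial k C k).ρ.norm x = 0
    simp [Representation.norm, hc]
  have hA : (Rep.applyAsHom (Rep.trivial k C k) g - 𝟙 _).hom.toLinearMap = 0 := by
    apply LinearMap.ext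
    intro x
    have h1 : (Rep.applyAsHom (Rep.trivial k C k) g).hom x = x := by
      rw [Rep.applyAsHom_apply]; rfl
    simp [Rep.sub_hom, h1]
  have : NeZero s := ⟨hs⟩
  rcases Nat.even_or_odd s with h | h
  · refine ⟨⟨Rep.FiniteCyclicGroup.groupCohomologyπEven _ g hg s h
      ⟨(1 : k), by rw [hA]; rfl⟩, 0, ?_⟩⟩
    rw [Ne, Rep.FiniteCyclicGroup.groupCohomologyπEven_eq_zero_iff, hN]
    rintro ⟨y, hy⟩
    exact one_ne_zero (α := k) hy.symm
  · refine ⟨⟨Rep.FiniteCyclicGroup.groupCohomologyπOdd _ g hg s h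
      ⟨(1 : k), by rw [hN]; rfl⟩, 0, ?_⟩⟩
    rw [Ne, Rep.FiniteCyclicGroup.groupCohomologyπOdd_eq_zero_iff, hA]
    rintro ⟨y, hy⟩
    exact one_ne_zero (α := k) hy.symm

lemma cyclic_nontrivial_group {k C : Type} [Field k] [inst : Group C] [Fintype C] (g : C)
    (hg : ∀ x, x ∈ Subgroup.zpowers g) (hc : (Fintype.card C : k) = 0) (s : ℕ) (hs : s ≠ 0) :
    Nontrivial (groupCohomology (Rep.trivial k C k) s) := by
  have hcomm : ∀ a b : C, a * b = b * a := by
    intro a b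
    obtain ⟨m, rfl⟩ := hg a
    obtain ⟨n, rfl⟩ := hg b
    exact (Commute.zpow_zpow_self g m n).eq
  let _ : CommGroup C := { inst with mul_comm := hcomm }
  exact cyclic_nontrivial g hg hc s hs

/-- A nonzero representation of a finite `p`-group in characteristic `p` has a nonzero fixed
vector. -/
lemma exists_fixed_vector (p : ℕ) [Fact p.Prime] {G : Type} [Group G] [Finite G]
    (hG : IsPGroup p G) {k : Type} [Field k] [CharP k p] {V : Type} [AddCommGroup V] [Module k V]
    [Nontrivial V] (ρ : Representation k G V) : ∃ w : V, w ≠ 0 ∧ ∀ g, ρ g w = w := by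
  obtain ⟨v, hv⟩ := exists_ne (0 : V)
  let : Algebra (ZMod p) k := ZMod.algebra k p
  let : Module (ZMod p) V := Module.compHom V (algebraMap (ZMod p) k)
  let F : Submodule (ZMod p) V := Submodule.span (ZMod p) (Set.range fun g => ρ g v)
  have hvF : v ∈ F := Submodule.subset_span ⟨1, by simp⟩
  have : Module.Finite (ZMod p) F := Module.Finite.span_of_finite _ (Set.finite_range _)
  have : Finite F := Module.finite_of_finite (ZMod p)
  have hst : ∀ g, ∀ x ∈ F, ρ g x ∈ F := by
    intro g x hx
    induction hx using Submodule.span_induction with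
    | mem x hx =>
      obtain ⟨h, rfl⟩ := hx
      exact Submodule.subset_span ⟨g * h, by simp⟩
    | zero => simp
    | add x y _ _ hx hy => rw [map_add]; exact F.add_mem hx hy
    | smul a x _ hx =>
      have : ρ g (a • x) = a • ρ g x := (ρ g).map_smul (algebraMap (ZMod p) k a) x
      rw [this]; exact F.smul_mem a hx
  let : MulAction G F :=
    { smul := fun g x => ⟨ρ g x, hst g x x.2⟩
      one_smul := fun x => Subtype.ext (by change ρ 1 (x : V) = x; simp)
      mul_smul := fun g h x => Subtype.ext (by
        change ρ (g * h) (x : V) = ρ g (ρ h x); simp) }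
  have hsm : ∀ (g : G) (x : F), ((g • x : F) : V) = ρ g x := fun _ _ => rfl
  have hp : p ∣ Nat.card F := by
    have h1 : addOrderOf (⟨v, hvF⟩ : F) = p := by
      apply addOrderOf_eq_prime
      · rw [← Nat.cast_smul_eq_nsmul (ZMod p)]; simp
      · intro h; exact hv (congrArg Subtype.val h)
    exact h1.symm.dvd.trans (addOrderOf_dvd_natCard _)
  obtain ⟨b, hb, hb0⟩ := hG.exists_fixed_point_of_prime_dvd_card_of_fixed_point F hp (a := 0)
    (fun g => Subtype.ext (by rw [hsm]; simp))
  refine ⟨b, fun h => hb0 (Subtype.ext h.symm), fun g => ?_⟩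
  rw [← hsm, hb g]

open CategoryTheory in
/-- If `H^s(G; k) = 0` then `H^s(G; M) = 0` for all finite dimensional `M`. -/
lemma subsingleton_of_trivial (p : ℕ) [Fact p.Prime] {G : Type} [Group G] [Finite G]
    (hG : IsPGroup p G) {k : Type} [Field k] [CharP k p] (s : ℕ)
    (h : Subsingleton (groupCohomology (Rep.trivial k G k) s)) (n : ℕ) :
    ∀ (M : Rep.{0} k G), Module.Finite k M.V → Module.finrank k M.V = n →
      Subsingleton (groupCohomology M s) := by
  induction n using Nat.strong_induction_on with
  | _ n ih =>
  intro M hM hn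
  rcases subsingleton_or_nontrivial M.V with hV | hV
  · have hz : Limits.IsZero M := (Rep.isZero_iff k G M).2 hV
    exact ModuleCat.subsingleton_of_isZero
      ((groupCohomology.functor k G s).map_isZero hz)
  obtain ⟨w, hw0, hw⟩ := exists_fixed_vector p hG M.ρ
  let W : Submodule k M.V := LinearMap.range (LinearMap.toSpanSingleton k M.V w)
  have hW : ∀ g, W ≤ W.comap (M.ρ g) := by
    rintro g _ ⟨c, rfl⟩
    exact ⟨c, by simp [hw]⟩
  have hwW : w ∈ W := ⟨1, by simp⟩
  let f : Rep.trivial k G k ⟶ M := Rep.ofHom (σ := M.ρ) ⟨LinearMap.toSpanSingleton k M.V w, by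
    intro g; apply LinearMap.ext; intro x; simp [hw]⟩
  let q : M ⟶ M.quotient W hW := M.mkQ W hW
  have hfq : f ≫ q = 0 := by
    apply Rep.hom_ext
    apply Representation.IntertwiningMap.ext
    apply LinearMap.ext
    intro x
    exact (Submodule.Quotient.mk_eq_zero W).2 ⟨x, rfl⟩
  let X : ShortComplex (Rep.{0} k G) := ShortComplex.mk f q hfq
  have hX : X.ShortExact :=
    { exact := by
        have : (X.map (forget₂ (Rep k G) (ModuleCat k))).Exact := by
          rw [ShortComplex.moduleCat_exact_iff]
          intro x hx
          exact (Submodule.Quotient.mk_eq_zero W).1 hx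
        exact (ShortComplex.exact_map_iff_of_faithful X (forget₂ (Rep k G) (ModuleCat k))).1 this
      mono_f := (Rep.mono_iff_injective _).2 (by
        intro x y hxy
        exact smul_left_injective k hw0 hxy)
      epi_g := (Rep.epi_iff_surjective _).2 (Submodule.mkQ_surjective W) }
  have hlt : Module.finrank k (M.V ⧸ W) < n := by
    have h1 := Submodule.finrank_quotient_add_finrank W
    have : Nontrivial W := ⟨⟨⟨w, hwW⟩, 0, fun h => hw0 (congrArg Subtype.val h)⟩⟩
    have h2 : 0 < Module.finrank k W := Module.finrank_pos
    omega
  have h3 : Subsingleton (groupCohomology X.X₃ s) :=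
    ih _ hlt (M.quotient W hW) (inferInstanceAs (Module.Finite k (M.V ⧸ W))) rfl
  have hex := groupCohomology.mapShortComplex₂_exact hX s
  have hz := hex.isZero_of_both_zeros
    ((ModuleCat.isZero_of_iff_subsingleton (M := groupCohomology X.X₁ s)).2 h |>.eq_of_src _ _)
    ((ModuleCat.isZero_of_iff_subsingleton (M := groupCohomology X.X₃ s)).2 h3 |>.eq_of_tgt _ _)
  exact ModuleCat.subsingleton_of_isZero hz

/-- For `p` prime, `G` a nontrivial finite `p`-group, and `k` a field of characteristic `p`,
the group cohomology of `G` with trivial coefficients `k` is unbounded: there are infinitely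
many `s` with `H^s(G; k) ≠ 0`. -/
theorem groupCohomology_p_group_unbounded
    (p : ℕ) [Fact p.Prime] (G : Type) [Group G] [Finite G] [Nontrivial G]
    (hG : IsPGroup p G) (k : Type) [Field k] [CharP k p] :
    {s : ℕ | Nontrivial (groupCohomology (Rep.trivial k G k) s)}.Infinite := by
  refine (Set.Ici_infinite 1).mono fun s hs => ?_
  have hs0 : s ≠ 0 := Nat.one_le_iff_ne_zero.1 hs
  rw [Set.mem_ofPred_eq]
  by_contra hcon
  rw [not_nontrivial_iff_subsingleton] at hcon
  have hdvd : p ∣ Nat.card G := by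
    obtain ⟨n, hn⟩ := IsPGroup.iff_card.1 hG
    have h1 := Finite.one_lt_card (α := G)
    rw [hn]
    refine dvd_pow_self p ?_
    rintro rfl
    simp [hn] at h1
  obtain ⟨g, hg⟩ := exists_prime_orderOf_dvd_card' p hdvd
  let S : Subgroup G := Subgroup.zpowers g
  let : Fintype S := Fintype.ofFinite S
  have hnt : Nontrivial (groupCohomology (Rep.trivial k S k) s) := by
    refine cyclic_nontrivial_group (k := k) (C := S) ⟨g, Subgroup.mem_zpowers g⟩ ?_ ?_ s hs0
    · rintro ⟨_, m, rfl⟩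
      exact ⟨m, Subtype.ext (by simp)⟩
    · rw [← Nat.card_eq_fintype_card, Nat.card_zpowers, hg]
      exact CharP.cast_eq_zero k p
  have hsub := subsingleton_of_trivial p hG s hcon _ (Rep.coind S.subtype (Rep.trivial k S k))
    (by
      let := Fintype.ofFinite G
      change Module.Finite k (Representation.coindV S.subtype (Rep.trivial k S k).ρ)
      have : Module.Finite k (G → (Rep.trivial k S k).V) :=
        inferInstanceAs (Module.Finite k (G → k))
      infer_instance) rfl
  have e := (groupCohomology.coindIso (Rep.trivial k S k) s).toLinearEquiv
  have := e.symm.injective.subsingleton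
  exact not_subsingleton _ this
end
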